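/- Let ξ be a centered Gaussian random vector in ℝ^d with covariance matrix C, let A be a symmetric real d×d matrix, and set Θ(n) = E⟨ξ, Aξ⟩^n (with Θ(0) = 1) and R_j = Tr((AC)^j). Then for every N ≥ 1, Σ_{n=0}^{N} C(N,n) (−1)^{N−n} Θ(n) R_1^{N−n} = Σ_{m=1}^{N} 2^{N−m} Σ_{k ∈ J_0(m,N)} c(k) Π_{j=1}^{m} R_{k_j}, where C(N,n) is the binomial coefficient, J_0(m,N) is the set of m-tuples k = (k_1,…,k_m) of integers with each k_j ≥ 2 and k_1 + ⋯ + k_m = N, and c(k) = (N−1)! / Π_{j=2}^{m} (N − s_{j−1}(k)) with s_j(k) = k_1 + ⋯ + k_j. (The left-hand side equals the central moment E(⟨ξ, Aξ⟩ − E⟨ξ, Aξ⟩)^N.) -/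

import Mathlib

open MeasureTheory ProbabilityTheory Filter Matrix

noncomputable section

/-- `ξ` is a centered Gaussian random vector with covariance matrix `C`. -/
def IsCenteredGaussian {Ω : Type*} [MeasurableSpace Ω] (P : Measure Ω) {n : ℕ}
    (ξ : Ω → Fin n → ℝ) (C : Matrix (Fin n) (Fin n) ℝ) : Prop :=
  Measurable ξ ∧
    ∀ v : Fin n → ℝ,
      P.map (fun ω => v ⬝ᵥ ξ ω) = gaussianReal 0 (Real.toNNReal (v ⬝ᵥ C.mulVec v))

/-- Partial sum `s_j(k) = k_1 + ⋯ + k_j` (1-based; sums the first `j` entries). -/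
def psum {m : ℕ} (k : Fin m → ℕ) (j : ℕ) : ℕ :=
  ∑ i ∈ Finset.univ.filter (fun i : Fin m => (i : ℕ) < j), k i

/-- `J_0(m,N)`: `m`-tuples of integers, each `≥ 2`, summing to `N`. -/
def J0 (m N : ℕ) : Finset (Fin m → ℕ) :=
  (Finset.Nat.antidiagonalTuple m N).filter fun k => ∀ j, 2 ≤ k j

/-- The combinatorial constant `c(k) = (N-1)! / ∏_{j=2}^{m} (N - s_{j-1}(k))`. -/
def cconst (N : ℕ) {m : ℕ} (k : Fin m → ℕ) : ℝ :=
  ((N - 1).factorial : ℝ) / ∏ j ∈ Finset.Icc 2 m, ((N : ℝ) - psum k (j - 1))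

/-!
Choosing `S` with `S Sᵀ = C` and `Sᵀ A S = diag(w)` makes `⟨ξ, Aξ⟩` equal in law to `∑ wᵢ xᵢ²` for
independent standard Gaussians `xᵢ`, and `Tr((AC)^j) = ∑ wᵢ^j`. With `R_j = ∑ wᵢ^j` and
`Y = ∑ wᵢ xᵢ² - R_1`, repeated Gaussian integration by parts `E[xᵢ p] = E[∂ᵢ p]` yields the
moment-cumulant recursion
`E[Y^(n+2)] = ∑_{i+j=n} (n+1)!/j! · 2^(i+1) R_{i+2} · E[Y^j]`.
The tuple sums satisfy the same recursion, by splitting off the first entry `k_1 = i + 2`; there the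
power `2^(N-m)` is distributed over the entries as `∏ 2^(k_j - 1)`.
-/

section Tuples

open Finset hiding antidiagonal mem_antidiagonal
open Finset.HasAntidiagonal (antidiagonal mem_antidiagonal)

lemma mem_J0 {m N : ℕ} {k : Fin m → ℕ} : k ∈ J0 m N ↔ ∑ i, k i = N ∧ ∀ j, 2 ≤ k j := by
  simp only [J0, mem_filter, Finset.Nat.mem_antidiagonalTuple]

lemma J0_eq_empty_of_lt {m N : ℕ} (h : N < 2 * m) : J0 m N = ∅ := by
  refine eq_empty_of_forall_notMem fun k hk => ?_
  obtain ⟨hsum, htwo⟩ := mem_J0.1 hk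
  have hcard := card_nsmul_le_sum univ k 2 fun j _ => htwo j
  rw [card_fin, smul_eq_mul, hsum] at hcard
  omega

lemma J0_zero_left {N : ℕ} (h : N ≠ 0) : J0 0 N = ∅ :=
  eq_empty_of_forall_notMem fun k hk => h (by simpa using (mem_J0.1 hk).1.symm)

lemma eq_zero_iff_of_mem_J0 {m N : ℕ} {k : Fin m → ℕ} (hk : k ∈ J0 m N) : N = 0 ↔ m = 0 := by
  constructor <;> rintro rfl
  · by_contra hm
    simp [J0_eq_empty_of_lt (show 0 < 2 * m by omega)] at hk
  · by_contra hN
    simp [J0_zero_left hN] at hk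

lemma sum_J0_succ {β : Type*} [AddCommMonoid β] (m n : ℕ) (f : (Fin (m + 1) → ℕ) → β) :
    ∑ k ∈ J0 (m + 1) (n + 2), f k =
      ∑ p ∈ antidiagonal n, ∑ k ∈ J0 m p.2, f (Fin.cons (p.1 + 2) k) := by
  rw [sum_sigma']
  refine sum_bij' (fun k _ => ⟨(k 0 - 2, n + 2 - k 0), Fin.tail k⟩)
    (fun x _ => Fin.cons (x.1.1 + 2) x.2) ?_ ?_ ?_ ?_ ?_
  · intro k hk
    obtain ⟨hsum, htwo⟩ := mem_J0.1 hk
    rw [Fin.sum_univ_succ] at hsum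
    have := htwo 0
    simp only [mem_sigma, mem_antidiagonal, mem_J0, Fin.tail]
    exact ⟨by omega, by omega, fun j => htwo j.succ⟩
  · rintro ⟨⟨i, j⟩, k⟩ h
    simp only [mem_sigma, mem_antidiagonal, mem_J0] at h
    obtain ⟨hij, hsum, htwo⟩ := h
    refine mem_J0.2 ⟨?_, Fin.cases ?_ fun l => ?_⟩
    · simp only [Fin.sum_univ_succ, Fin.cons_zero, Fin.cons_succ]
      omega
    · simp
    · simpa using htwo l
  · intro k hk
    simp [Nat.sub_add_cancel ((mem_J0.1 hk).2 0)]
  · rintro ⟨⟨i, j⟩, k⟩ h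
    simp only [mem_sigma, mem_antidiagonal] at h
    simp [← h.1]
  · intro k hk
    simp [Nat.sub_add_cancel ((mem_J0.1 hk).2 0)]

lemma psum_zero {m : ℕ} (k : Fin m → ℕ) : psum k 0 = 0 := by
  simp [psum]

lemma psum_cons {m : ℕ} (a : ℕ) (k : Fin m → ℕ) (j : ℕ) :
    psum (Fin.cons a k : Fin (m + 1) → ℕ) (j + 1) = a + psum k j := by
  simp [psum, sum_filter, Fin.sum_univ_succ]

-- The product in `cconst` starts at `j = 2`; with the factor `N` for `j = 1` included it is
-- compatible with `Fin.cons`.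
lemma cconst_eq_factorial_div {m N : ℕ} (k : Fin m → ℕ) (h : N = 0 ↔ m = 0) :
    cconst N k = N.factorial / ∏ j ∈ range m, ((N : ℝ) - psum k j) := by
  obtain rfl | hm := eq_or_ne m 0
  · simp [cconst, h.2 rfl]
  obtain ⟨m, rfl⟩ := Nat.exists_eq_add_one_of_ne_zero hm
  obtain ⟨N, rfl⟩ := Nat.exists_eq_add_one_of_ne_zero (mt h.1 hm)
  have hIcc : Icc 2 (m + 1) = Ico (0 + 2) (m + 2) := by
    ext
    simp only [mem_Icc, mem_Ico]
    omega
  rw [cconst, prod_range_succ', psum_zero, hIcc, ← prod_Ico_add', Nat.Ico_zero_eq_range,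
    Nat.factorial_succ, add_tsub_cancel_right]
  push_cast
  rw [sub_zero, mul_comm ((N : ℝ) + 1), mul_div_mul_right _ _ (by positivity)]

lemma cconst_cons {m n : ℕ} (i : ℕ) (k : Fin m → ℕ) (h : n = 0 ↔ m = 0) :
    cconst (n + (i + 1)) (Fin.cons (i + 1) k : Fin (m + 1) → ℕ) =
      (n + i).descFactorial i * cconst n k := by
  have hfact : ((n + (i + 1)).factorial : ℝ) =
      (n + (i + 1) : ℝ) * ((n + i).descFactorial i * n.factorial) := by
    rw [← add_assoc n i 1, Nat.factorial_succ,
      ← Nat.factorial_mul_descFactorial (Nat.le_add_left i n), Nat.add_sub_cancel]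
    push_cast
    ring
  have hprod : ∏ j ∈ range (m + 1),
      (((n + (i + 1) : ℕ) : ℝ) - psum (Fin.cons (i + 1) k : Fin (m + 1) → ℕ) j) =
      (n + (i + 1) : ℝ) * ∏ j ∈ range m, ((n : ℝ) - psum k j) := by
    simp only [prod_range_succ', psum_cons, psum_zero]
    push_cast
    rw [sub_zero, mul_comm]
    congr! 2
    ring
  rw [cconst_eq_factorial_div _ (by simp), cconst_eq_factorial_div k h, hfact, hprod,
    mul_div_mul_left _ _ (by positivity), mul_div_assoc]

/-- The sum over `J_0(m, N)` of the theorem for an arbitrary sequence `κ`, without its power of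
`2`. If `(j - 1)! κ_j` are the cumulants of a centered random variable, its `N`-th moment is the
sum of these over `m`. -/
def tupleSum (κ : ℕ → ℝ) (m N : ℕ) : ℝ :=
  ∑ k ∈ J0 m N, cconst N k * ∏ j, κ (k j)

variable (κ : ℕ → ℝ)

lemma tupleSum_zero_zero : tupleSum κ 0 0 = 1 := by
  simp [tupleSum, J0, cconst]

lemma tupleSum_zero_left {N : ℕ} (h : N ≠ 0) : tupleSum κ 0 N = 0 := by
  rw [tupleSum, J0_zero_left h, sum_empty]

lemma tupleSum_of_lt {m N : ℕ} (h : N < 2 * m) : tupleSum κ m N = 0 := by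
  rw [tupleSum, J0_eq_empty_of_lt h, sum_empty]

lemma tupleSum_succ (m n : ℕ) :
    tupleSum κ (m + 1) (n + 2) = ∑ p ∈ antidiagonal n,
      (n + 1).descFactorial (p.1 + 1) * κ (p.1 + 2) * tupleSum κ m p.2 := by
  simp only [tupleSum, sum_J0_succ, mul_sum]
  refine sum_congr rfl fun p hp => sum_congr rfl fun k hk => ?_
  obtain rfl := mem_antidiagonal.1 hp
  have hc := cconst_cons (p.1 + 1) k (eq_zero_iff_of_mem_J0 hk)
  rw [show p.1 + p.2 + 2 = p.2 + (p.1 + 1 + 1) by ring, hc, Fin.prod_univ_succ,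
    show p.1 + p.2 + 1 = p.2 + (p.1 + 1) by ring]
  simp only [Fin.cons_zero, Fin.cons_succ]
  ring

lemma sum_range_tupleSum {N K : ℕ} (h : N < K) :
    ∑ m ∈ range K, tupleSum κ m N = ∑ m ∈ range (N + 1), tupleSum κ m N := by
  refine (sum_subset (range_mono h) fun m _ hm => tupleSum_of_lt κ ?_).symm
  rw [mem_range] at hm
  omega

theorem eq_sum_tupleSum_of_rec {κ M : ℕ → ℝ} (h0 : M 0 = 1) (h1 : M 1 = 0)
    (hrec : ∀ n, M (n + 2) = ∑ p ∈ antidiagonal n,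
      (n + 1).descFactorial (p.1 + 1) * κ (p.1 + 2) * M p.2) (N : ℕ) :
    M N = ∑ m ∈ range (N + 1), tupleSum κ m N := by
  induction N using Nat.strong_induction_on with
  | _ N ih =>
    match N with
    | 0 => simp [h0, tupleSum_zero_zero]
    | 1 => simp [h1, sum_range_succ, tupleSum_zero_left, tupleSum_of_lt]
    | n + 2 =>
      rw [sum_range_succ', tupleSum_zero_left κ (by omega), add_zero]
      simp only [tupleSum_succ]
      rw [hrec, sum_comm]
      refine sum_congr rfl fun p hp => ?_
      have hp2 := mem_antidiagonal.1 hp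
      rw [ih p.2 (by omega), ← sum_range_tupleSum κ (show p.2 < n + 2 by omega), mul_sum]

lemma tupleSum_pow_sub_one_mul (c : ℝ) (m N : ℕ) :
    tupleSum (fun j => c ^ (j - 1) * κ j) m N = c ^ (N - m) * tupleSum κ m N := by
  simp only [tupleSum, mul_sum]
  refine sum_congr rfl fun k hk => ?_
  obtain ⟨hsum, htwo⟩ := mem_J0.1 hk
  have hexp : ∑ j, (k j - 1) = N - m := by
    rw [sum_tsub_distrib _ fun j _ => one_le_two.trans (htwo j), hsum]
    simp
  rw [prod_mul_distrib, prod_pow_eq_pow_sum, hexp]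
  ring

end Tuples

section Stein

lemma hasDerivAt_gaussianPDFReal (μ : ℝ) (v : NNReal) (x : ℝ) :
    HasDerivAt (gaussianPDFReal μ v) (-((x - μ) / v * gaussianPDFReal μ v x)) x := by
  have hexp : HasDerivAt (fun x : ℝ => -(x - μ) ^ 2 / (2 * v)) (-((x - μ) / v)) x := by
    refine ((((hasDerivAt_id' x).sub_const μ).pow 2).fun_neg.div_const (2 * (v : ℝ))).congr_deriv ?_
    rw [Nat.add_one_sub_one, pow_one, mul_one, neg_div, Nat.cast_ofNat,
      mul_div_mul_left _ _ two_ne_zero]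
  refine (hexp.exp.const_mul (√(2 * Real.pi * v))⁻¹).congr_deriv ?_
  rw [gaussianPDFReal]
  ring

lemma integrable_gaussianReal_iff {μ : ℝ} {v : NNReal} (hv : v ≠ 0) {f : ℝ → ℝ} :
    Integrable f (gaussianReal μ v) ↔ Integrable fun x => gaussianPDFReal μ v x * f x := by
  rw [gaussianReal_of_var_ne_zero _ hv, gaussianPDF_def,
    integrable_withDensity_iff_integrable_smul' (by fun_prop) (by simp)]
  simp only [ENNReal.toReal_ofReal (gaussianPDFReal_nonneg μ v _), smul_eq_mul]

theorem integral_sub_mul_gaussianReal {μ : ℝ} {v : NNReal} {f f' : ℝ → ℝ}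
    (hf : ∀ x, HasDerivAt f (f' x) x) (hfi : Integrable f (gaussianReal μ v))
    (hxf : Integrable (fun x => (x - μ) * f x) (gaussianReal μ v))
    (hf' : Integrable f' (gaussianReal μ v)) :
    ∫ x, (x - μ) * f x ∂gaussianReal μ v = v * ∫ x, f' x ∂gaussianReal μ v := by
  obtain rfl | hv := eq_or_ne v 0
  · simp
  have hv' : (v : ℝ) ≠ 0 := NNReal.coe_ne_zero.2 hv
  rw [integrable_gaussianReal_iff hv] at hfi hxf hf'
  have hparts := integral_mul_deriv_eq_deriv_mul_of_integrable (u := f) (v := gaussianPDFReal μ v)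
    (fun x _ => hf x) (fun x _ => hasDerivAt_gaussianPDFReal μ v x)
    ((hxf.const_mul (-(v : ℝ)⁻¹)).congr (.of_forall fun x => by simp only [Pi.mul_apply]; ring))
    (hf'.congr (.of_forall fun x => mul_comm _ _)) (hfi.congr (.of_forall fun x => mul_comm _ _))
  rw [integral_gaussianReal_eq_integral_smul hv, integral_gaussianReal_eq_integral_smul hv]
  simp only [smul_eq_mul, mul_comm (gaussianPDFReal μ v _) (f' _)]
  rw [← neg_eq_iff_eq_neg.2 hparts, ← integral_neg, ← integral_const_mul]
  congr with x
  field

lemma integrable_pow_gaussianReal (μ : ℝ) (v : NNReal) (n : ℕ) :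
    Integrable (fun x => x ^ n) (gaussianReal μ v) :=
  (memLp_id_gaussianReal n).integrable_norm_pow'.mono' (by fun_prop) (by simp)

lemma integral_pow_succ_gaussianReal (v : NNReal) (n : ℕ) :
    ∫ x, x ^ (n + 1) ∂gaussianReal 0 v = v * (n * ∫ x, x ^ (n - 1) ∂gaussianReal 0 v) := by
  have hstein := integral_sub_mul_gaussianReal (v := v) (μ := 0) (hasDerivAt_pow n)
    (integrable_pow_gaussianReal 0 v n)
    (by simpa only [sub_zero, ← pow_succ'] using integrable_pow_gaussianReal 0 v (n + 1))
    ((integrable_pow_gaussianReal 0 v (n - 1)).const_mul _)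
  simpa only [sub_zero, ← pow_succ', integral_const_mul] using hstein

end Stein

section Polynomials

open MvPolynomial

variable {ι : Type*} [Fintype ι]

/-- The standard Gaussian law on `ι → ℝ`, as a product measure so that integrals of monomials
factor. -/
abbrev stdGaussianPi (ι : Type*) [Fintype ι] : Measure (ι → ℝ) :=
  Measure.pi fun _ => gaussianReal 0 1

lemma integrable_eval_stdGaussianPi (p : MvPolynomial ι ℝ) :
    Integrable (fun x => eval x p) (stdGaussianPi ι) := by
  induction p using MvPolynomial.induction_on' with
  | monomial s a =>
    simp only [eval_monomial, Finsupp.prod_fintype _ _ fun _ => pow_zero _]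
    exact (Integrable.fintype_prod fun i => integrable_pow_gaussianReal 0 1 (s i)).const_mul a
  | add p q hp hq =>
    simp only [map_add]
    exact hp.add hq

/-- Expectation of a polynomial in independent standard Gaussian variables, as a linear map, so
that identities need only be checked on monomials. -/
def gaussianExpectation (ι : Type*) [Fintype ι] : MvPolynomial ι ℝ →ₗ[ℝ] ℝ where
  toFun p := ∫ x, eval x p ∂stdGaussianPi ι
  map_add' p q := by
    simp only [map_add]
    exact integral_add (integrable_eval_stdGaussianPi p) (integrable_eval_stdGaussianPi q)
  map_smul' a p := by
    simp only [smul_eval, RingHom.id_apply, smul_eq_mul]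
    exact integral_const_mul _ _

lemma gaussianExpectation_apply (p : MvPolynomial ι ℝ) :
    gaussianExpectation ι p = ∫ x, eval x p ∂stdGaussianPi ι := rfl

lemma gaussianExpectation_one : gaussianExpectation ι 1 = 1 := by
  simp [gaussianExpectation_apply]

lemma gaussianExpectation_C_mul (a : ℝ) (p : MvPolynomial ι ℝ) :
    gaussianExpectation ι (C a * p) = a * gaussianExpectation ι p := by
  rw [← smul_eq_C_mul, map_smul, smul_eq_mul]

lemma gaussianExpectation_monomial (s : ι →₀ ℕ) (a : ℝ) :
    gaussianExpectation ι (monomial s a) = a * ∏ i, ∫ x, x ^ s i ∂gaussianReal 0 1 := by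
  simp only [gaussianExpectation_apply, eval_monomial,
    Finsupp.prod_fintype _ _ fun _ => pow_zero _]
  rw [integral_const_mul, integral_fintype_prod_eq_prod fun i (x : ℝ) => x ^ s i]

theorem gaussianExpectation_X_mul (i : ι) (p : MvPolynomial ι ℝ) :
    gaussianExpectation ι (X i * p) = gaussianExpectation ι (pderiv i p) := by
  classical
  induction p using MvPolynomial.induction_on' with
  | monomial s a =>
    have hfactor (t : ι →₀ ℕ) (b : ℝ) : gaussianExpectation ι (monomial t b) =
        b * ((∫ x, x ^ t i ∂gaussianReal 0 1) *
          ∏ j ∈ Finset.univ.erase i, ∫ x, x ^ t j ∂gaussianReal 0 1) := by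
      rw [gaussianExpectation_monomial,
        Finset.mul_prod_erase _ (fun j => ∫ x, x ^ t j ∂gaussianReal 0 1) (Finset.mem_univ i)]
    have hne : ∀ j ∈ Finset.univ.erase i, Finsupp.single i 1 j = 0 := fun j hj =>
      Finsupp.single_eq_of_ne (Finset.ne_of_mem_erase hj)
    rw [pderiv_monomial, X, monomial_mul, hfactor, hfactor]
    simp +contextual only [Finsupp.add_apply, Finsupp.tsub_apply, Finsupp.single_eq_same, hne,
      add_comm 1, zero_add, tsub_zero, integral_pow_succ_gaussianReal, NNReal.coe_one]
    ring
  | add p q hp hq => simp only [mul_add, map_add, hp, hq]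

/-- The quadratic form `∑ wᵢ Xᵢ²` to which `⟨ξ, Aξ⟩` is reduced, as a polynomial so that integration
by parts becomes `pderiv`. -/
def diagonalForm {R : Type*} [CommSemiring R] (w : ι → R) : MvPolynomial ι R :=
  ∑ i, C (w i) * X i ^ 2

lemma eval_diagonalForm {R : Type*} [CommSemiring R] (w x : ι → R) :
    eval x (diagonalForm w) = ∑ i, w i * x i ^ 2 := by
  simp only [diagonalForm, map_sum, map_mul, map_pow, eval_C, eval_X]

lemma pderiv_diagonalForm {R : Type*} [CommSemiring R] (w : ι → R) (i : ι) :
    pderiv i (diagonalForm w) = C (2 * w i) * X i := by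
  classical
  have hterm (j : ι) : pderiv i (C (w j) * X j ^ 2 : MvPolynomial ι R) =
      if j = i then C (2 * w i) * X i else 0 := by
    rw [pderiv_C_mul, Derivation.leibniz_pow, pderiv_X, Pi.single_apply]
    obtain rfl | h := eq_or_ne j i
    · simp [mul_assoc, mul_comm (C (w j)), ← map_ofNat C]
    · simp [h]
  simp [diagonalForm, hterm]

lemma gaussianExpectation_diagonalForm_mul_pow (v w : ι → ℝ) (r : ℝ) (n : ℕ) :
    gaussianExpectation ι (diagonalForm v * (diagonalForm w - C r) ^ n) =
      (∑ i, v i) * gaussianExpectation ι ((diagonalForm w - C r) ^ n) +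
        2 * n * gaussianExpectation ι
          (diagonalForm (v * w) * (diagonalForm w - C r) ^ (n - 1)) := by
  set Y := diagonalForm w - C r with hY
  have hcoord (i : ι) : gaussianExpectation ι (C (v i) * X i ^ 2 * Y ^ n) =
      v i * gaussianExpectation ι (Y ^ n) + 2 * n * gaussianExpectation ι
        (C ((v * w) i) * X i ^ 2 * Y ^ (n - 1)) := by
    have hdY : pderiv i (X i * Y ^ n) =
        Y ^ n + C (2 * n * w i) * (X i ^ 2 * Y ^ (n - 1)) := by
      rw [Derivation.leibniz, Derivation.leibniz_pow, hY, map_sub, pderiv_diagonalForm, pderiv_C,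
        pderiv_X_self]
      simp only [smul_eq_mul, nsmul_eq_mul, map_mul, map_natCast, map_ofNat]
      ring
    have hsq : X i ^ 2 * Y ^ n = X i * (X i * Y ^ n) := by ring
    rw [mul_assoc (C _), mul_assoc (C _), gaussianExpectation_C_mul, gaussianExpectation_C_mul,
      hsq, gaussianExpectation_X_mul, hdY, map_add, gaussianExpectation_C_mul, Pi.mul_apply]
    ring
  rw [diagonalForm, Finset.sum_mul, map_sum, Finset.sum_congr rfl fun i _ => hcoord i,
    Finset.sum_add_distrib, ← Finset.sum_mul, ← Finset.mul_sum, ← map_sum, ← Finset.sum_mul,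
    ← diagonalForm]

open Finset.HasAntidiagonal (antidiagonal)

lemma gaussianExpectation_diagonalForm_mul_pow_eq_sum (v w : ι → ℝ) (r : ℝ) (n : ℕ) :
    gaussianExpectation ι (diagonalForm v * (diagonalForm w - C r) ^ n) =
      ∑ p ∈ antidiagonal n, n.descFactorial p.1 * (2 ^ p.1 * ∑ i, v i * w i ^ p.1) *
        gaussianExpectation ι ((diagonalForm w - C r) ^ p.2) := by
  induction n generalizing v with
  | zero =>
    rw [gaussianExpectation_diagonalForm_mul_pow]
    simp
  | succ n ih =>
    rw [gaussianExpectation_diagonalForm_mul_pow, Finset.Nat.sum_antidiagonal_succ,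
      Nat.add_sub_cancel, ih, Finset.mul_sum]
    congr 1
    · simp
    · refine Finset.sum_congr rfl fun p _ => ?_
      simp only [Nat.succ_descFactorial_succ, Pi.mul_apply, pow_succ', mul_assoc]
      push_cast
      ring

theorem gaussianExpectation_centered_diagonalForm_pow (w : ι → ℝ) (N : ℕ) :
    gaussianExpectation ι ((diagonalForm w - C (∑ i, w i)) ^ N) =
      ∑ m ∈ Finset.range (N + 1), 2 ^ (N - m) * tupleSum (fun j => ∑ i, w i ^ j) m N := by
  simp only [← tupleSum_pow_sub_one_mul]
  set Y := diagonalForm w - C (∑ i, w i) with hY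
  have hsucc (n : ℕ) : gaussianExpectation ι (Y ^ (n + 1)) =
      gaussianExpectation ι (diagonalForm w * Y ^ n) -
        (∑ i, w i) * gaussianExpectation ι (Y ^ n) := by
    rw [pow_succ', ← gaussianExpectation_C_mul, ← map_sub, ← sub_mul]
  refine eq_sum_tupleSum_of_rec (M := fun n => gaussianExpectation ι (Y ^ n)) ?_ ?_ (fun n => ?_) N
  · rw [pow_zero, gaussianExpectation_one]
  · have h := hsucc 0
    rw [gaussianExpectation_diagonalForm_mul_pow_eq_sum] at h
    simpa using h
  · rw [hsucc, gaussianExpectation_diagonalForm_mul_pow_eq_sum,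
      Finset.Nat.sum_antidiagonal_succ]
    simp [← pow_succ', hY]

end Polynomials

section GaussianVectors

lemma trace_mul_pow_comm {R n : Type*} [CommSemiring R] [Fintype n] [DecidableEq n]
    (M N : Matrix n n R) (j : ℕ) : ((M * N) ^ j).trace = ((N * M) ^ j).trace := by
  cases j with
  | zero => simp only [pow_zero]
  | succ j =>
    rw [pow_succ, ← Matrix.mul_assoc, mul_pow_mul, Matrix.mul_assoc, trace_mul_comm,
      Matrix.mul_assoc, ← pow_succ]

variable {ι : Type*} [Fintype ι]

open scoped MatrixOrder in
lemma exists_mul_transpose_eq_and_eq_diagonal [DecidableEq ι] {C A : Matrix ι ι ℝ}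
    (hC : C.PosSemidef) (hA : A.IsSymm) :
    ∃ (S : Matrix ι ι ℝ) (w : ι → ℝ), S * Sᵀ = C ∧ Sᵀ * A * S = diagonal w := by
  set T := CFC.sqrt C
  have hTT : T * T = C := CFC.sqrt_mul_sqrt_self C (ha := hC.nonneg)
  have hT : Tᵀ = T := by
    have hherm : T.IsHermitian := (CFC.sqrt_nonneg C).isSelfAdjoint
    rwa [IsHermitian, conjTranspose_eq_transpose_of_trivial] at hherm
  have hB : (T * A * T).IsHermitian := by
    rw [IsHermitian, conjTranspose_eq_transpose_of_trivial, transpose_mul, transpose_mul, hT, hA.eq,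
      Matrix.mul_assoc]
  set U : Matrix ι ι ℝ := hB.eigenvectorUnitary.1
  have hUU : U * Uᵀ = 1 := by
    simpa [star_eq_conjTranspose] using Unitary.coe_mul_star_self hB.eigenvectorUnitary
  have hdiag : Uᵀ * (T * A * T) * U = diagonal hB.eigenvalues := by
    have h := hB.conjStarAlgAut_star_eigenvectorUnitary
    rw [Unitary.conjStarAlgAut_star_apply] at h
    simpa [star_eq_conjTranspose] using h
  refine ⟨T * U, hB.eigenvalues, ?_, ?_⟩
  · rw [transpose_mul, hT, Matrix.mul_assoc, ← Matrix.mul_assoc U, hUU, Matrix.one_mul, hTT]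
  · rw [← hdiag, transpose_mul, hT]
    simp only [Matrix.mul_assoc]

lemma dotProduct_mulVec_mulVec_of_eq_diagonal {R : Type*} [CommSemiring R] [DecidableEq ι]
    {A S : Matrix ι ι R} {w : ι → R} (h : Sᵀ * A * S = diagonal w) (x : ι → R) :
    (S *ᵥ x) ⬝ᵥ A *ᵥ (S *ᵥ x) = ∑ i, w i * x i ^ 2 := by
  have hmove : (S *ᵥ x) ⬝ᵥ A *ᵥ (S *ᵥ x) = x ⬝ᵥ (Sᵀ * A * S) *ᵥ x := by
    rw [← mulVec_mulVec, ← mulVec_mulVec, dotProduct_mulVec x, vecMul_transpose]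
  rw [hmove, h, dotProduct]
  refine Finset.sum_congr rfl fun i _ => ?_
  rw [mulVec_diagonal]
  ring

lemma trace_mul_pow_of_eq_diagonal {R : Type*} [CommSemiring R] [DecidableEq ι]
    {C A S : Matrix ι ι R} {w : ι → R} (hS : S * Sᵀ = C) (hw : Sᵀ * A * S = diagonal w) (j : ℕ) :
    ((A * C) ^ j).trace = ∑ i, w i ^ j := by
  rw [← hS, ← Matrix.mul_assoc, trace_mul_pow_comm, ← Matrix.mul_assoc, hw, diagonal_pow,
    trace_diagonal]
  rfl

theorem measure_ext_of_map_dotProduct {μ ν : Measure (ι → ℝ)} [IsFiniteMeasure μ]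
    [IsFiniteMeasure ν] (h : ∀ v : ι → ℝ, μ.map (v ⬝ᵥ ·) = ν.map (v ⬝ᵥ ·)) : μ = ν := by
  classical
  refine Measure.ext_of_charFunDual (funext fun L => ?_)
  have hL : ⇑L = ((fun i => L fun j => if i = j then 1 else 0) ⬝ᵥ ·) := by
    ext x
    simp only [dotProduct, mul_comm _ (x _)]
    exact LinearMap.pi_apply_eq_sum_univ L.toLinearMap x
  rw [charFunDual_eq_charFun_map_one, charFunDual_eq_charFun_map_one, hL, h]

lemma measurable_const_dotProduct (v : ι → ℝ) : Measurable (v ⬝ᵥ ·) := by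
  unfold dotProduct
  fun_prop

lemma measurable_mulVec (S : Matrix ι ι ℝ) : Measurable (S *ᵥ ·) := by
  unfold mulVec dotProduct
  fun_prop

lemma map_dotProduct_stdGaussianPi (v : ι → ℝ) :
    (stdGaussianPi ι).map (v ⬝ᵥ ·) = gaussianReal 0 (v ⬝ᵥ v).toNNReal := by
  refine Measure.ext_of_charFun (funext fun t => ?_)
  have hfactor (x : ι → ℝ) : Complex.exp (t * (v ⬝ᵥ x : ℝ) * Complex.I) =
      ∏ i, Complex.exp ((t * v i : ℝ) * x i * Complex.I) := by
    rw [← Complex.exp_sum, dotProduct, Complex.ofReal_sum, Finset.mul_sum, Finset.sum_mul]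
    simp only [Complex.ofReal_mul, mul_assoc]
  rw [charFun_apply_real, integral_map (measurable_const_dotProduct v).aemeasurable (by fun_prop)]
  simp only [hfactor]
  rw [integral_fintype_prod_eq_prod fun i (x : ℝ) =>
    Complex.exp ((t * v i : ℝ) * x * Complex.I)]
  simp only [← charFun_apply_real, charFun_gaussianReal]
  rw [← Complex.exp_sum, Real.coe_toNNReal (v ⬝ᵥ v)
    (Finset.sum_nonneg fun i _ => mul_self_nonneg (v i)), dotProduct]
  congr 1
  push_cast
  simp only [Finset.sum_mul, Finset.sum_div, mul_zero, zero_mul, zero_sub, Finset.sum_neg_distrib]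
  congr! 2
  ring

theorem IsCenteredGaussian.map_eq {Ω : Type*} [MeasurableSpace Ω] {P : Measure Ω}
    [IsFiniteMeasure P] {d : ℕ} {ξ : Ω → Fin d → ℝ} {C S : Matrix (Fin d) (Fin d) ℝ}
    (hξ : IsCenteredGaussian P ξ C) (hS : S * Sᵀ = C) :
    P.map ξ = (stdGaussianPi (Fin d)).map (S *ᵥ ·) := by
  refine measure_ext_of_map_dotProduct fun v => ?_
  have hvar : (v ᵥ* S) ⬝ᵥ (v ᵥ* S) = v ⬝ᵥ C *ᵥ v := by
    rw [← hS, ← mulVec_mulVec, dotProduct_mulVec v, mulVec_transpose]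
  rw [Measure.map_map (measurable_const_dotProduct v) hξ.1,
    Measure.map_map (measurable_const_dotProduct v) (measurable_mulVec S)]
  simp only [Function.comp_def, dotProduct_mulVec v S, map_dotProduct_stdGaussianPi, hvar, hξ.2 v]

theorem IsCenteredGaussian.integral_sub_const_pow {Ω : Type*} [MeasurableSpace Ω] {P : Measure Ω}
    [IsFiniteMeasure P] {d : ℕ} {ξ : Ω → Fin d → ℝ} {C A S : Matrix (Fin d) (Fin d) ℝ}
    {w : Fin d → ℝ} (hξ : IsCenteredGaussian P ξ C) (hS : S * Sᵀ = C)
    (hw : Sᵀ * A * S = diagonal w) (r : ℝ) (n : ℕ) :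
    ∫ ω, (ξ ω ⬝ᵥ A *ᵥ ξ ω - r) ^ n ∂P =
      gaussianExpectation (Fin d) ((diagonalForm w - MvPolynomial.C r) ^ n) := by
  have hmeas : Measurable fun x : Fin d → ℝ => (x ⬝ᵥ A *ᵥ x - r) ^ n := by
    unfold mulVec dotProduct
    fun_prop
  calc ∫ ω, (ξ ω ⬝ᵥ A *ᵥ ξ ω - r) ^ n ∂P
      = ∫ x, (x ⬝ᵥ A *ᵥ x - r) ^ n ∂P.map ξ :=
        (integral_map hξ.1.aemeasurable hmeas.aestronglyMeasurable).symm
    _ = ∫ x, ((S *ᵥ x) ⬝ᵥ A *ᵥ (S *ᵥ x) - r) ^ n ∂stdGaussianPi (Fin d) := by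
        rw [hξ.map_eq hS,
          integral_map (measurable_mulVec S).aemeasurable hmeas.aestronglyMeasurable]
    _ = gaussianExpectation (Fin d) ((diagonalForm w - MvPolynomial.C r) ^ n) := by
        simp only [dotProduct_mulVec_mulVec_of_eq_diagonal hw, gaussianExpectation_apply, map_pow,
          map_sub, eval_diagonalForm, MvPolynomial.eval_C]

lemma integral_sub_const_pow {Ω : Type*} [MeasurableSpace Ω] {P : Measure Ω} {X : Ω → ℝ}
    (hX : ∀ n : ℕ, Integrable (fun ω => X ω ^ n) P) (r : ℝ) (N : ℕ) :
    ∫ ω, (X ω - r) ^ N ∂P = ∑ n ∈ Finset.range (N + 1),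
      (N.choose n : ℝ) * (-1) ^ (N - n) * (∫ ω, X ω ^ n ∂P) * r ^ (N - n) := by
  have hexpand (ω : Ω) : (X ω - r) ^ N = ∑ n ∈ Finset.range (N + 1),
      (N.choose n : ℝ) * (-1) ^ (N - n) * r ^ (N - n) * X ω ^ n := by
    rw [sub_eq_add_neg, add_pow]
    refine Finset.sum_congr rfl fun n _ => ?_
    rw [neg_pow r]
    ring
  simp only [hexpand]
  rw [integral_finsetSum _ fun n _ => (hX n).const_mul _]
  refine Finset.sum_congr rfl fun n _ => ?_
  rw [integral_const_mul]
  ring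

end GaussianVectors

theorem stmt12 {Ω : Type*} [MeasurableSpace Ω] (P : Measure Ω) [IsProbabilityMeasure P]
    {d : ℕ} (ξ : Ω → Fin d → ℝ) (C A : Matrix (Fin d) (Fin d) ℝ)
    (hC : C.PosSemidef) (hA : A.IsSymm)
    (hξ : IsCenteredGaussian P ξ C)
    (hint : ∀ k : ℕ, Integrable (fun ω => (ξ ω ⬝ᵥ A.mulVec (ξ ω)) ^ k) P)
    (N : ℕ) (hN : 1 ≤ N) :
    (∑ n ∈ Finset.range (N + 1),
        (N.choose n : ℝ) * (-1 : ℝ) ^ (N - n) *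
          (∫ ω, (ξ ω ⬝ᵥ A.mulVec (ξ ω)) ^ n ∂P) *
          (Matrix.trace (A * C)) ^ (N - n)) =
      ∑ m ∈ Finset.Icc 1 N,
        (2 : ℝ) ^ (N - m) *
          ∑ k ∈ J0 m N, cconst N k * ∏ j : Fin m, Matrix.trace ((A * C) ^ (k j)) := by
  obtain ⟨S, w, hS, hw⟩ := exists_mul_transpose_eq_and_eq_diagonal hC hA
  have htrace := trace_mul_pow_of_eq_diagonal hS hw
  have hmean : (A * C).trace = ∑ i, w i := by simpa only [pow_one] using htrace 1
  simp only [htrace, hmean]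
  rw [← integral_sub_const_pow hint, hξ.integral_sub_const_pow hS hw,
    gaussianExpectation_centered_diagonalForm_pow, Finset.range_eq_Ico,
    Finset.sum_eq_sum_Ico_succ_bot N.add_one_pos, tupleSum_zero_left _ (by omega), mul_zero,
    zero_add, zero_add, Finset.Ico_add_one_right_eq_Icc]
  rfl
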